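/- arXiv:1901.07398 — 2 statements merged into one kernel-verified Lean document; each statement's English description precedes it below -/
import Mathlib

section
/- Let K > 1 and let F : (0, ∞) → [0, 1] be a non-decreasing function satisfying the growth condition with parameter K. Then for every integer ℓ ≥ 1 and every t > 0, one has F(t) ≥ 2^ℓ · (1 − F(t)) · F(t/K^ℓ). -/
/-!
Cross-multiplied, the growth condition reads `2 F(t) (1 - F(Kt)) ≤ F(Kt) (1 - F(t))`: the odds
`F / (1 - F)` at least double when the argument is multiplied by `K`. Iterating `ℓ` times from
`t / K ^ ℓ` up to `t` gives `2 ^ ℓ F(t / K ^ ℓ) (1 - F(t)) ≤ F(t) (1 - F(t / K ^ ℓ))`, and the last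
factor is at most `1`. Infinite odds are harmless: once `F` takes the value `1` it keeps it, by
monotonicity, and then the left-hand side vanishes.
-/

open MeasureTheory

/-- The growth condition with parameter `K`:
`F(Kt)/(1−F(Kt)) ≥ 2·F(t)/(1−F(t))` for all `t > 0`, where the quotients are computed
in `ℝ≥0∞` so that `a/0 = ∞` for `a ≠ 0` (the conventions `1/0 = ∞`, `1/∞ = 0`). -/
def GrowthCond (F : ℝ → ℝ) (K : ℝ) : Prop :=
  ∀ t : ℝ, 0 < t →
    2 * (ENNReal.ofReal (F t) / ENNReal.ofReal (1 - F t)) ≤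
      ENNReal.ofReal (F (K * t)) / ENNReal.ofReal (1 - F (K * t))

/-- Odds inequality in `ℝ≥0∞` cross-multiplied in `ℝ`. -/
lemma two_mul_le_of_odds {a b : ℝ} (ha : 0 ≤ a) (hab : a ≤ b) (hb : b ≤ 1)
    (h : 2 * (ENNReal.ofReal a / ENNReal.ofReal (1 - a)) ≤
      ENNReal.ofReal b / ENNReal.ofReal (1 - b)) :
    2 * a * (1 - b) ≤ b * (1 - a) := by
  rcases hb.eq_or_lt with rfl | hb'
  · linarith
  have h1 : 0 < 1 - b := by linarith
  have h2 : 0 < 1 - a := by linarith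
  rw [← ENNReal.ofReal_div_of_pos h1, ← ENNReal.ofReal_div_of_pos h2,
    ← ENNReal.ofReal_ofNat 2, ← ENNReal.ofReal_mul (by norm_num),
    ENNReal.ofReal_le_ofReal_iff (div_nonneg (ha.trans hab) h1.le), ← mul_div_assoc,
    div_le_div_iff₀ h2 h1] at h
  exact h

/-- The odds of `F` grow by a factor of at least `2 ^ ℓ` from `s` to `K ^ ℓ * s`. -/
lemma two_pow_mul_le_of_growthCond {K : ℝ} (hK : 1 < K) {F : ℝ → ℝ}
    (hmono : ∀ s t : ℝ, 0 < s → s ≤ t → F s ≤ F t)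
    (hrange : ∀ t : ℝ, 0 < t → F t ∈ Set.Icc (0 : ℝ) 1)
    (hgrowth : GrowthCond F K) (ℓ : ℕ) {s : ℝ} (hs : 0 < s) :
    (2 : ℝ) ^ ℓ * F s * (1 - F (K ^ ℓ * s)) ≤ F (K ^ ℓ * s) * (1 - F s) := by
  induction ℓ with
  | zero => simp
  | succ ℓ ih =>
    have hm : 0 < K ^ ℓ * s := by positivity
    have hle : K ^ ℓ * s ≤ K * (K ^ ℓ * s) := le_mul_of_one_le_left hm.le hK.le
    have hbc := hmono _ _ hm hle
    rw [pow_succ' K, mul_assoc K]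
    obtain ⟨ha0, ha1⟩ := hrange s hs
    obtain ⟨hb0, hb1⟩ := hrange _ hm
    obtain ⟨hc0, hc1⟩ := hrange _ (hm.trans_le hle)
    have hstep := two_mul_le_of_odds hb0 hbc hc1 (hgrowth _ hm)
    generalize F (K * (K ^ ℓ * s)) = c at *
    generalize F (K ^ ℓ * s) = b at *
    generalize F s = a at *
    rcases hb1.eq_or_lt with rfl | hb1
    · obtain rfl : c = 1 := le_antisymm hc1 hbc
      linarith
    · refine le_of_mul_le_mul_right ?_ (sub_pos.2 hb1)
      calc 2 ^ (ℓ + 1) * a * (1 - c) * (1 - b)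
          = 2 * (1 - c) * (2 ^ ℓ * a * (1 - b)) := by ring
        _ ≤ 2 * (1 - c) * (b * (1 - a)) :=
          mul_le_mul_of_nonneg_left ih (by linarith)
        _ = 2 * b * (1 - c) * (1 - a) := by ring
        _ ≤ c * (1 - b) * (1 - a) :=
          mul_le_mul_of_nonneg_right hstep (by linarith)
        _ = c * (1 - a) * (1 - b) := by ring

theorem stmt_7 (K : ℝ) (hK : 1 < K) (F : ℝ → ℝ)
    (hmono : ∀ s t : ℝ, 0 < s → s ≤ t → F s ≤ F t)
    (hrange : ∀ t : ℝ, 0 < t → F t ∈ Set.Icc (0 : ℝ) 1)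
    (hgrowth : GrowthCond F K) :
    ∀ ℓ : ℕ, 1 ≤ ℓ → ∀ t : ℝ, 0 < t →
      (2 : ℝ) ^ ℓ * (1 - F t) * F (t / K ^ ℓ) ≤ F t := by
  intro ℓ _ t ht
  have hKℓ : 0 < K ^ ℓ := by positivity
  have hs : 0 < t / K ^ ℓ := div_pos ht hKℓ
  have h := two_pow_mul_le_of_growthCond hK hmono hrange hgrowth ℓ hs
  rw [mul_div_cancel₀ t hKℓ.ne'] at h
  have h' := mul_nonneg (hrange t ht).1 (hrange _ hs).1
  linarith
end

section
/- Let K > 1 and let F : (0, ∞) → [0, 1] be a non-decreasing function satisfying the growth condition with parameter K. Let ℓ ≥ 1 be an integer, γ ∈ (0, 1), and t > 0 be such that F(t) ≥ 1 − γ. Then 1 − F(t/K^ℓ) ≥ (2^ℓ/(2^ℓ·γ + 1)) · (1 − F(t)). -/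
/-!
Clearing denominators, the growth condition says `2 F(s) (1 - F(Ks)) ≤ F(Ks) (1 - F(s))`
(`growth_mul`). Iterating it gives `2^n F(s) (1 - F(K^n s)) ≤ F(K^n s) (1 - F(s))`
(`growth_iterate`). With `s = t / K^ℓ`, `u = 1 - F(s)`, `v = 1 - F(t) ≤ γ` and `N = 2^ℓ`, this
reads `N (1 - u) v ≤ (1 - v) u`, so `N v ≤ u (1 - v + N v) ≤ u (1 + N γ)`.
-/

open MeasureTheory

theorem growth_mul (K : ℝ) (hK : 1 < K) (F : ℝ → ℝ)
    (hmono : ∀ s t : ℝ, 0 < s → s ≤ t → F s ≤ F t)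
    (hrange : ∀ t : ℝ, 0 < t → F t ∈ Set.Icc (0 : ℝ) 1)
    (hgrowth : GrowthCond F K) (s : ℝ) (hs : 0 < s) :
    2 * F s * (1 - F (K * s)) ≤ F (K * s) * (1 - F s) := by
  have hKs : 0 < K * s := by positivity
  obtain ⟨ha0, ha1⟩ := hrange s hs
  obtain ⟨hb0, hb1⟩ := hrange (K * s) hKs
  have hab := hmono s (K * s) hs (by nlinarith)
  rcases hb1.eq_or_lt with hb | hb
  · rw [hb]; linarith
  · have h1 : 0 < 1 - F s := by linarith
    have h2 : 0 < 1 - F (K * s) := by linarith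
    have h := hgrowth s hs
    rw [← ENNReal.ofReal_div_of_pos h1, ← ENNReal.ofReal_div_of_pos h2,
      ← ENNReal.ofReal_ofNat 2, ← ENNReal.ofReal_mul (by norm_num),
      ENNReal.ofReal_le_ofReal_iff (by positivity), ← mul_div_assoc,
      div_le_div_iff₀ h1 h2] at h
    exact h

theorem growth_iterate (K : ℝ) (hK : 1 < K) (F : ℝ → ℝ)
    (hmono : ∀ s t : ℝ, 0 < s → s ≤ t → F s ≤ F t)
    (hrange : ∀ t : ℝ, 0 < t → F t ∈ Set.Icc (0 : ℝ) 1)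
    (hgrowth : GrowthCond F K) (s : ℝ) (hs : 0 < s) (n : ℕ) :
    2 ^ n * F s * (1 - F (K ^ n * s)) ≤ F (K ^ n * s) * (1 - F s) := by
  induction n with
  | zero => simp only [pow_zero, one_mul]; exact le_rfl
  | succ n ih =>
    have hn : 0 < K ^ n * s := by positivity
    have hstep := growth_mul K hK F hmono hrange hgrowth _ hn
    have hle := hmono _ (K * (K ^ n * s)) hn (by nlinarith)
    have hb' := hrange (K * (K ^ n * s)) (by positivity)
    have hb := hrange _ hn
    have ha := hrange s hs
    rw [show K ^ (n + 1) * s = K * (K ^ n * s) by ring, pow_succ]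
    generalize F (K * (K ^ n * s)) = c at *
    generalize F (K ^ n * s) = b at *
    generalize F s = a at *
    obtain ⟨ha0, ha1⟩ := ha
    obtain ⟨hb0, hb1⟩ := hb
    obtain ⟨hc0, hc1⟩ := hb'
    rcases hb1.eq_or_lt with h | h
    · have hc : c = 1 := by linarith
      subst hc
      linarith
    · -- Multiply the two bounds and cancel the common factor `1 - b > 0`.
      have h1 := mul_le_mul_of_nonneg_right ih (show 0 ≤ 2 * (1 - c) by linarith)
      have h2 := mul_le_mul_of_nonneg_right hstep (show 0 ≤ 1 - a by linarith)
      refine le_of_mul_le_mul_right ?_ (show 0 < 1 - b by linarith)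
      linarith

theorem stmt_8 (K : ℝ) (hK : 1 < K) (F : ℝ → ℝ)
    (hmono : ∀ s t : ℝ, 0 < s → s ≤ t → F s ≤ F t)
    (hrange : ∀ t : ℝ, 0 < t → F t ∈ Set.Icc (0 : ℝ) 1)
    (hgrowth : GrowthCond F K)
    (ℓ : ℕ) (hℓ : 1 ≤ ℓ) (γ : ℝ) (hγ : γ ∈ Set.Ioo (0 : ℝ) 1)
    (t : ℝ) (ht : 0 < t) (hFt : 1 - γ ≤ F t) :
    (2 : ℝ) ^ ℓ / ((2 : ℝ) ^ ℓ * γ + 1) * (1 - F t) ≤ 1 - F (t / K ^ ℓ) := by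
  have hs : 0 < t / K ^ ℓ := by positivity
  have h := growth_iterate K hK F hmono hrange hgrowth _ hs ℓ
  rw [mul_div_cancel₀ t (by positivity : K ^ ℓ ≠ 0)] at h
  obtain ⟨-, ha1⟩ := hrange _ hs
  obtain ⟨-, hb1⟩ := hrange t ht
  obtain ⟨hγ0, -⟩ := hγ
  have hN : (0 : ℝ) < 2 ^ ℓ := by positivity
  rw [div_mul_eq_mul_div, div_le_iff₀ (by positivity)]
  have hu : 0 ≤ 1 - F (t / K ^ ℓ) := by linarith
  have h1 : 2 ^ ℓ * ((1 - F (t / K ^ ℓ)) * (1 - F t)) ≤ 2 ^ ℓ * ((1 - F (t / K ^ ℓ)) * γ) := by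
    gcongr
    linarith
  have h2 : 0 ≤ (1 - F (t / K ^ ℓ)) * (1 - F t) := mul_nonneg hu (by linarith)
  linarith
end
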